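/- If σ = σ₁…σ_N is a legal sequence of moves in the auxiliary game and for some index k the pair σ_k σ_{k+1} is a repetition (that is, the resulting position of σ_{k+1} equals the initial position of σ_k), then the sequence obtained from σ by deleting σ_k and σ_{k+1} is legal, has the same initial and resulting positions as σ, and has the same flow F through every vertex of G as σ. -/

import Mathlib

/-!
The auxiliary game of Shitov, "Chess God's number grows exponentially".

Fix `m ≥ 1`.  The graph `G` has cycle vertices `(0,t)` for `t ∈ ℤ/3m` and triangle
vertices `(i,j)` for `1 ≤ i ≤ m`, `j ∈ {1,2,3}`.  We use 0-based indices: the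
triangle vertex `(i,j)` of the paper (with `1 ≤ i ≤ m`, `1 ≤ j ≤ 3`) is
`Vtx.tri ⟨i-1⟩ ⟨j-1⟩`, and its paired cycle vertex `(0, 3i+j-3)` is
`Vtx.cycle (pairC ⟨i-1⟩ ⟨j-1⟩)` where `pairC i j = 3*i + j + 1 (mod 3m)`.
-/

namespace AuxGame

/-- What occupies a vertex: nothing, the chip, or a switch. -/
inductive Occ : Type
  | empty : Occ
  | chip : Occ
  | switch : Occ
deriving DecidableEq

/-- Vertices of the graph `G`: the big cycle of length `3m`, and `m` triangles. -/
inductive Vtx (m : ℕ) : Type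
  | cycle : ZMod (3 * m) → Vtx m
  | tri : Fin m → ZMod 3 → Vtx m
deriving DecidableEq

/-- The cycle vertex paired with the triangle vertex `(i,j)` (0-based):
this is the vertex `(0, 3i+j-3)` of the paper. -/
def pairC {m : ℕ} (i : Fin m) (j : ZMod 3) : ZMod (3 * m) :=
  ((3 * i.val + j.val + 1 : ℕ) : ZMod (3 * m))

/-- Adjacency in `G`: consecutive vertices of the big cycle, and distinct
vertices of one triangle. -/
def Adjacent {m : ℕ} : Vtx m → Vtx m → Prop
  | .cycle t, .cycle t' => t' = t + 1 ∨ t' = t - 1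
  | .tri i j, .tri i' j' => i = i' ∧ j ≠ j'
  | _, _ => False

/-- `u` and `v` form a pair `{(i,j), (0,3i+j-3)}` (in either order). -/
def IsPair {m : ℕ} : Vtx m → Vtx m → Prop
  | .tri i j, .cycle t => t = pairC i j
  | .cycle t, .tri i j => t = pairC i j
  | _, _ => False

/-- A position of the auxiliary game: every vertex is empty, or carries the chip,
or carries (exactly) one switch; there is exactly one chip; and for every pair
`{(i,j), (0,3i+j-3)}` at least one of the two vertices carries a switch. -/
structure Pos (m : ℕ) where
  occ : Vtx m → Occ
  chip_exists_unique : ∃! v : Vtx m, occ v = Occ.chip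
  switch_pair : ∀ (i : Fin m) (j : ZMod 3),
    occ (Vtx.tri i j) = Occ.switch ∨ occ (Vtx.cycle (pairC i j)) = Occ.switch

/-- A single move: the chip moves from vertex `from'` to vertex `to'`,
transforming position `src` into position `dst`. -/
structure Move (m : ℕ) where
  src : Pos m
  dst : Pos m
  from' : Vtx m
  to' : Vtx m

/-- Legality of a single move: either a *jump* (the chip moves to an adjacent
vacant vertex of its triangle, or to an adjacent vacant vertex of the cycle),
or a *swap* (the chip, standing on one vertex of a pair, is exchanged with the
switch on the other vertex of that pair).  In both cases the destination gets
the chip, the source gets whatever was at the destination (nothing for a jump,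
the switch for a swap), and all other vertices are unchanged. -/
def Move.Legal {m : ℕ} (mv : Move m) : Prop :=
  mv.src.occ mv.from' = Occ.chip ∧
  ((Adjacent mv.from' mv.to' ∧ mv.src.occ mv.to' = Occ.empty) ∨
    (IsPair mv.from' mv.to' ∧ mv.src.occ mv.to' = Occ.switch)) ∧
  mv.dst.occ mv.to' = Occ.chip ∧
  mv.dst.occ mv.from' = mv.src.occ mv.to' ∧
  ∀ w : Vtx m, w ≠ mv.from' → w ≠ mv.to' → mv.dst.occ w = mv.src.occ w

/-- `Leads σ A B`: `σ` is a legal sequence of moves with initial position `A`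
and resulting position `B` (each move is legal, and the resulting position of
each move is the initial position of the next one). -/
inductive Leads {m : ℕ} : List (Move m) → Pos m → Pos m → Prop
  | nil (A : Pos m) : Leads [] A A
  | cons (mv : Move m) (σ : List (Move m)) (B : Pos m) :
      mv.Legal → Leads σ mv.dst B → Leads (mv :: σ) mv.src B

/-- `σ` is a legal sequence of moves. -/
def LegalSeq {m : ℕ} (σ : List (Move m)) : Prop :=
  ∃ A B : Pos m, Leads σ A B

/-- `#(σ, u, v)`: the number of single moves in `σ` carrying the chip from
vertex `u` to vertex `v` (used with `u`, `v` in one component, where such moves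
are exactly jumps). -/
def jmpCount {m : ℕ} (σ : List (Move m)) (u v : Vtx m) : ℕ :=
  (σ.filter fun mv => decide (mv.from' = u ∧ mv.to' = v)).length

/-- The successor of a vertex in its own component: `(0,t) ↦ (0,t+1)` and
`(i,j) ↦ (i,j+1 mod 3)`. -/
def nxt {m : ℕ} : Vtx m → Vtx m
  | .cycle t => .cycle (t + 1)
  | .tri i j => .tri i (j + 1)

/-- The predecessor of a vertex in its own component. -/
def prv {m : ℕ} : Vtx m → Vtx m
  | .cycle t => .cycle (t - 1)
  | .tri i j => .tri i (j - 1)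

/-- Twice the flow through a vertex `v = (i₀,j₀)`:
`#(σ,i₀,j₀-1,j₀) + #(σ,i₀,j₀,j₀+1) - #(σ,i₀,j₀+1,j₀) - #(σ,i₀,j₀,j₀-1)` as an integer. -/
def dflow {m : ℕ} (σ : List (Move m)) (v : Vtx m) : ℤ :=
  (jmpCount σ (prv v) v : ℤ) + (jmpCount σ v (nxt v) : ℤ)
    - (jmpCount σ (nxt v) v : ℤ) - (jmpCount σ v (prv v) : ℤ)

/-- The flow `F(σ, i₀, j₀)` through the vertex `v = (i₀,j₀)`. -/
def flow {m : ℕ} (σ : List (Move m)) (v : Vtx m) : ℚ :=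
  (dflow σ v : ℚ) / 2

/-- `P` is the starting position: switches on `(i,1)`, `(i,3)`, `(0,3i-1)`
(0-based: `tri i 0`, `tri i 2`, `cycle (pairC i 1)`), the chip on some cycle
vertex not of the form `(0,3i-1)`, and all other vertices empty. -/
def IsStarting {m : ℕ} (P : Pos m) : Prop :=
  (∀ i : Fin m,
    P.occ (Vtx.tri i 0) = Occ.switch ∧
    P.occ (Vtx.tri i 1) = Occ.empty ∧
    P.occ (Vtx.tri i 2) = Occ.switch ∧
    P.occ (Vtx.cycle (pairC i 1)) = Occ.switch) ∧
  ∃ t : ZMod (3 * m),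
    (∀ i : Fin m, t ≠ pairC i 1) ∧
    P.occ (Vtx.cycle t) = Occ.chip ∧
    ∀ s : ZMod (3 * m), s ≠ t → (∀ i : Fin m, s ≠ pairC i 1) →
      P.occ (Vtx.cycle s) = Occ.empty

end AuxGame

namespace AuxGame

variable {m : ℕ}

section Sequences

variable {a : Move m} {σ τ : List (Move m)} {A B C : Pos m}

theorem leads_nil_iff : Leads [] A B ↔ A = B := by
  constructor
  · rintro ⟨⟩
    rfl
  · rintro rfl
    exact .nil A

theorem leads_cons_iff : Leads (a :: σ) A B ↔ A = a.src ∧ a.Legal ∧ Leads σ a.dst B := by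
  constructor
  · rintro ⟨⟩
    exact ⟨rfl, ‹a.Legal›, ‹Leads σ a.dst B›⟩
  · rintro ⟨rfl, ha, hσ⟩
    exact .cons a σ B ha hσ

theorem leads_append_iff : Leads (σ ++ τ) A C ↔ ∃ B, Leads σ A B ∧ Leads τ B C := by
  induction σ generalizing A with
  | nil => simp only [List.nil_append, leads_nil_iff, exists_eq_left']
  | cons a σ ih =>
    simp only [List.cons_append, leads_cons_iff, ih, exists_and_left, and_assoc]

end Sequences

section ChipPath

variable {a b : Move m}

theorem Pos.eq_of_occ_eq_chip (P : Pos m) {u v : Vtx m} (hu : P.occ u = .chip)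
    (hv : P.occ v = .chip) : u = v :=
  P.chip_exists_unique.unique hu hv

theorem Move.Legal.occ_src_from' (ha : a.Legal) : a.src.occ a.from' = .chip :=
  ha.1

theorem Move.Legal.occ_dst_to' (ha : a.Legal) : a.dst.occ a.to' = .chip :=
  ha.2.2.1

theorem Move.Legal.to'_eq_from' (ha : a.Legal) (hb : b.Legal) (hab : a.dst = b.src) :
    a.to' = b.from' :=
  b.src.eq_of_occ_eq_chip (hab ▸ ha.occ_dst_to') hb.occ_src_from'

end ChipPath

section Flow

variable {a b : Move m}

theorem jmpCount_append (σ τ : List (Move m)) (u v : Vtx m) :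
    jmpCount (σ ++ τ) u v = jmpCount σ u v + jmpCount τ u v := by
  simp only [jmpCount, List.filter_append, List.length_append]

theorem flow_append (σ τ : List (Move m)) (v : Vtx m) :
    flow (σ ++ τ) v = flow σ v + flow τ v := by
  simp only [flow, dflow, jmpCount_append]
  push_cast
  ring

theorem flow_cons (a : Move m) (σ : List (Move m)) (v : Vtx m) :
    flow (a :: σ) v = flow [a] v + flow σ v :=
  flow_append [a] σ v

theorem jmpCount_singleton (a : Move m) (u v : Vtx m) :
    jmpCount [a] u v = if a.from' = u ∧ a.to' = v then 1 else 0 := by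
  simp only [jmpCount, ← List.countP_eq_length_filter, List.countP_singleton, decide_eq_true_eq]

theorem jmpCount_singleton_of_opposite (hab : a.to' = b.from') (hba : b.to' = a.from')
    (u v : Vtx m) : jmpCount [b] u v = jmpCount [a] v u := by
  simp only [jmpCount_singleton, hab, hba, and_comm]

theorem flow_singleton_of_opposite (hab : a.to' = b.from') (hba : b.to' = a.from')
    (v : Vtx m) : flow [b] v = -flow [a] v := by
  simp only [flow, dflow, jmpCount_singleton_of_opposite hab hba]
  push_cast
  ring

end Flow

end AuxGame

open AuxGame in
/-- If a legal sequence `σ = α ++ a :: b :: β` contains a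
repetition `a b` (i.e. the resulting position of `b` equals the initial position
of `a`), then deleting the two moves `a`, `b` yields a legal sequence with the
same initial and resulting positions and the same flow through every vertex. -/
theorem statement3 (m : ℕ) (hm : 1 ≤ m) (A B : Pos m)
    (α β : List (Move m)) (a b : Move m)
    (hσ : Leads (α ++ a :: b :: β) A B) (hrep : b.dst = a.src) :
    Leads (α ++ β) A B ∧
      ∀ v : Vtx m, flow (α ++ β) v = flow (α ++ a :: b :: β) v := by
  obtain ⟨_, hα, habβ⟩ := leads_append_iff.mp hσ
  obtain ⟨rfl, ha, hbβ⟩ := leads_cons_iff.mp habβ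
  obtain ⟨hab, hb, hβ⟩ := leads_cons_iff.mp hbβ
  refine ⟨leads_append_iff.mpr ⟨a.src, hα, hrep ▸ hβ⟩, fun v => ?_⟩
  -- Positions determine where the chip stands, so `b` carries it back along the path of `a`.
  have hcancel : flow [b] v = -flow [a] v :=
    flow_singleton_of_opposite (ha.to'_eq_from' hb hab) (hb.to'_eq_from' ha hrep) v
  calc
    flow (α ++ β) v = flow α v + flow β v := flow_append α β v
    _ = flow α v + (flow [a] v + (flow [b] v + flow β v)) := by rw [hcancel]; ring
    _ = flow (α ++ a :: b :: β) v := by rw [flow_append, flow_cons a (b :: β), flow_cons b β]
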